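/- arXiv:1601.04908 — 11 statements merged into one kernel-verified Lean document; each statement's English description precedes it below -/
import Mathlib

section
/- Let A and B be positive semidefinite real n×n matrices. Then the range of A (as a linear map on ℝ^n via matrix-vector multiplication) is contained in the range of B if and only if there exists a real number k > 0 such that B - k•A is positive semidefinite. -/
open Matrix

lemma range_le_of_ker_le_aux {n : ℕ} (A B : Matrix (Fin n) (Fin n) ℝ)
    (hA : Aᵀ = A) (hB : Bᵀ = B) (h : ∀ x, B *ᵥ x = 0 → A *ᵥ x = 0) :
    LinearMap.range A.mulVecLin ≤ LinearMap.range B.mulVecLin := by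
  obtain ⟨g, hg⟩ := B.mulVecLin.rangeRestrict.exists_rightInverse_of_surjective
    (LinearMap.range_rangeRestrict _)
  obtain ⟨Z, hZ⟩ := LinearMap.exists_extend (A.mulVecLin ∘ₗ g)
  have key : A = LinearMap.toMatrix' Z * B := by
    apply Matrix.toLin'.injective
    ext1 i
    apply LinearMap.ext_ring
    generalize hx : (LinearMap.single ℝ (fun _ : Fin n => ℝ) i) 1 = x
    simp only [LinearMap.comp_apply, hx, Matrix.toLin'_apply, ← Matrix.mulVec_mulVec,
      LinearMap.toMatrix'_mulVec]
    have h1 := LinearMap.congr_fun hZ (B.mulVecLin.rangeRestrict x)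
    have h2 := congrArg Subtype.val (LinearMap.congr_fun hg (B.mulVecLin.rangeRestrict x))
    simp at h1 h2
    rw [h1]
    have h3 := h (x - g (B.mulVecLin.rangeRestrict x)) (by
      rw [Matrix.mulVec_sub, h2, sub_self])
    rw [Matrix.mulVec_sub, sub_eq_zero] at h3
    exact h3
  have key2 : A = B * (LinearMap.toMatrix' Z)ᵀ := by
    conv_lhs => rw [← hA, key, Matrix.transpose_mul, hB]
  rw [key2, Matrix.mulVecLin_mul]
  exact LinearMap.range_comp_le_range _ _

lemma exists_factor_aux {n : ℕ} {A : Matrix (Fin n) (Fin n) ℝ} (hA : A.PosSemidef) :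
    ∃ D : Matrix (Fin n) (Fin n) ℝ, A = Dᵀ * D := by
  open scoped MatrixOrder Matrix.Norms.L2Operator in
  obtain ⟨B, rfl⟩ := CStarAlgebra.nonneg_iff_eq_star_mul_self.mp hA.nonneg
  exact ⟨B, by rw [star_eq_conjTranspose, conjTranspose_eq_transpose_of_trivial]⟩

lemma quad_aux {n : ℕ} (D : Matrix (Fin n) (Fin n) ℝ) (x y : Fin n → ℝ) :
    x ⬝ᵥ (Dᵀ * D) *ᵥ y = (D *ᵥ x) ⬝ᵥ (D *ᵥ y) := by
  rw [← mulVec_mulVec, dotProduct_mulVec, vecMul_transpose]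

/-- For positive semidefinite real `n × n` matrices `A` and `B`,
the range of `A` (as a linear map on `ℝ^n`) is contained in the range of `B`
iff there is `k > 0` with `B - k • A` positive semidefinite. -/
theorem range_subset_iff_exists_khyponym {n : ℕ} (A B : Matrix (Fin n) (Fin n) ℝ)
    (hA : A.PosSemidef) (hB : B.PosSemidef) :
    LinearMap.range A.mulVecLin ≤ LinearMap.range B.mulVecLin ↔
      ∃ k : ℝ, 0 < k ∧ (B - k • A).PosSemidef := by
  have hAt : Aᵀ = A := by simpa using hA.1.eq
  have hBt : Bᵀ = B := by simpa using hB.1.eq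
  constructor
  · intro h
    obtain ⟨D, hD⟩ := exists_factor_aux hA
    obtain ⟨E, hE⟩ := exists_factor_aux hB
    have hr : LinearMap.range Dᵀ.mulVecLin ≤ LinearMap.range A.mulVecLin := by
      refine le_of_eq (Submodule.eq_of_le_of_finrank_eq ?_ ?_).symm
      · rw [hD, Matrix.mulVecLin_mul]
        exact LinearMap.range_comp_le_range _ _
      · change A.rank = Dᵀ.rank
        rw [hD, Matrix.rank_transpose_mul_self, Matrix.rank_transpose]
    have hw : ∀ i, ∃ w, B *ᵥ w = D i := fun i => by
      have : D i ∈ LinearMap.range Dᵀ.mulVecLin := ⟨Pi.single i 1, by ext j; simp⟩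
      exact h (hr this)
    choose w hw using hw
    set c : ℝ := ∑ i, (E *ᵥ w i) ⬝ᵥ (E *ᵥ w i) with hc
    have hc0 : 0 ≤ c := Finset.sum_nonneg fun i _ =>
      Finset.sum_nonneg fun j _ => mul_self_nonneg _
    have hbound : ∀ x, x ⬝ᵥ A *ᵥ x ≤ c * (x ⬝ᵥ B *ᵥ x) := fun x => by
      rw [hD, hE, quad_aux, quad_aux, hc, Finset.sum_mul]
      refine Finset.sum_le_sum fun i _ => ?_
      have h1 : (D *ᵥ x) i = (E *ᵥ w i) ⬝ᵥ (E *ᵥ x) := by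
        rw [← quad_aux, ← hE, dotProduct_mulVec, ← mulVec_transpose, hBt, hw]
        rfl
      rw [h1, ← sq]
      have := Finset.sum_mul_sq_le_sq_mul_sq Finset.univ (E *ᵥ w i) (E *ᵥ x)
      simpa [dotProduct, sq] using this
    refine ⟨(c + 1)⁻¹, by positivity, .of_dotProduct_mulVec_nonneg ?_ fun x => ?_⟩
    · change _ᴴ = _
      simp [hAt, hBt]
    · have hb : 0 ≤ x ⬝ᵥ B *ᵥ x := by simpa using hB.dotProduct_mulVec_nonneg x
      have h2 := hbound x
      simp only [star_trivial, sub_mulVec, smul_mulVec, dotProduct_sub, dotProduct_smul,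
        smul_eq_mul]
      rw [sub_nonneg, inv_mul_le_iff₀ (by positivity)]
      linarith
  · rintro ⟨k, hk, h⟩
    refine range_le_of_ker_le_aux A B hAt hBt fun x hx => ?_
    have h1 := h.dotProduct_mulVec_nonneg x
    have h2 := hA.dotProduct_mulVec_nonneg x
    rw [← hA.dotProduct_mulVec_zero_iff]
    simp only [sub_mulVec, smul_mulVec, dotProduct_sub, dotProduct_smul, smul_eq_mul, hx,
      dotProduct_zero] at h1
    nlinarith
end

section
/- Let A and B be positive semidefinite real n×n matrices. Then every eigenvalue of the product matrix B * A is a nonnegative real number; that is, the spectrum of B * A (viewed over ℂ) is contained in the nonnegative reals. -/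
open Matrix

open scoped ComplexOrder in
lemma gram_spectrum_nonneg {n : ℕ} (E : Matrix (Fin n) (Fin n) ℂ) (μ : ℂ)
    (h : μ ∈ spectrum ℂ (Eᴴ * E)) : 0 ≤ μ.re ∧ μ.im = 0 := by
  have hP : (Eᴴ * E).PosSemidef := Matrix.posSemidef_conjTranspose_mul_self _
  have h2 : (0:ℂ) ≤ μ := (Matrix.posSemidef_iff_isHermitian_and_spectrum_nonneg.mp hP).2 h
  rw [Complex.le_def] at h2
  exact ⟨h2.1, h2.2.symm⟩

/-- For positive semidefinite real `n × n` matrices `A` and `B`,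
every complex eigenvalue of the product `B * A` is a nonnegative real number. -/
theorem spectrum_mul_posSemidef_nonneg_real {n : ℕ} (A B : Matrix (Fin n) (Fin n) ℝ)
    (hA : A.PosSemidef) (hB : B.PosSemidef) :
    ∀ μ ∈ spectrum ℂ ((B * A).map (algebraMap ℝ ℂ)), ∃ r : ℝ, 0 ≤ r ∧ μ = (r : ℂ) := by
  intro μ hμ
  obtain ⟨C, rfl⟩ : ∃ C : Matrix (Fin n) (Fin n) ℝ, B = Cᴴ * C := by
    open scoped MatrixOrder in
    exact CStarAlgebra.nonneg_iff_eq_star_mul_self.mp hB.nonneg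
  obtain ⟨D, rfl⟩ : ∃ D : Matrix (Fin n) (Fin n) ℝ, A = Dᴴ * D := by
    open scoped MatrixOrder in
    exact CStarAlgebra.nonneg_iff_eq_star_mul_self.mp hA.nonneg
  by_cases h0 : μ = 0
  · exact ⟨0, le_rfl, by simp [h0]⟩
  let c := C.map (algebraMap ℝ ℂ)
  let d := D.map (algebraMap ℝ ℂ)
  have hc : Cᴴ.map (algebraMap ℝ ℂ) = cᴴ := by
    ext i j; simp [c]
  have hd : Dᴴ.map (algebraMap ℝ ℂ) = dᴴ := by
    ext i j; simp [d]
  have hmem : μ ∈ spectrum ℂ (cᴴ * (c * dᴴ * d)) \ {0} := by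
    refine ⟨?_, h0⟩
    rw [Matrix.map_mul, Matrix.map_mul, Matrix.map_mul, hc, hd] at hμ
    change μ ∈ spectrum ℂ (cᴴ * c * (dᴴ * d)) at hμ
    simpa only [Matrix.mul_assoc] using hμ
  rw [spectrum.nonzero_mul_comm] at hmem
  have h2 := gram_spectrum_nonneg (d * cᴴ) μ
    (by simpa [Matrix.mul_assoc] using hmem.1)
  exact ⟨μ.re, h2.1, Complex.ext (by simp) (by simpa using h2.2)⟩
end

section
/- Let A and B be positive semidefinite real n×n matrices with A ≠ 0 and with the range of A (as a linear map via matrix-vector multiplication) contained in the range of B. Then the set {k ∈ ℝ | B - k•A is positive semidefinite} has a greatest element, and this greatest element equals the infimum, over all x ∈ ℝ^n with xᵀ A x > 0, of the ratios (xᵀ B x)/(xᵀ A x). -/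
open Matrix

/-- For positive semidefinite real `n × n` matrices `A ≠ 0` and `B` with
`range A ⊆ range B`, the set `{k | B - k • A is PSD}` has a greatest element, which equals
the infimum over all `x` with `xᵀ A x > 0` of the ratios `(xᵀ B x) / (xᵀ A x)`. -/
theorem kmax_eq_inf_rayleigh {n : ℕ} (A B : Matrix (Fin n) (Fin n) ℝ)
    (hA : A.PosSemidef) (hB : B.PosSemidef) (hA0 : A ≠ 0)
    (hrange : LinearMap.range A.mulVecLin ≤ LinearMap.range B.mulVecLin) :
    IsGreatest {k : ℝ | (B - k • A).PosSemidef}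
      (sInf {r : ℝ | ∃ x : Fin n → ℝ,
        0 < x ⬝ᵥ A.mulVec x ∧ r = (x ⬝ᵥ B.mulVec x) / (x ⬝ᵥ A.mulVec x)}) := by
  have hAn : ∀ x : Fin n → ℝ, 0 ≤ x ⬝ᵥ A.mulVec x := fun x => by
    simpa using (posSemidef_iff_dotProduct_mulVec.1 hA).2 x
  have hBn : ∀ x : Fin n → ℝ, 0 ≤ x ⬝ᵥ B.mulVec x := fun x => by
    simpa using (posSemidef_iff_dotProduct_mulVec.1 hB).2 x
  have key : ∀ (k : ℝ) (x : Fin n → ℝ), star x ⬝ᵥ ((B - k • A) *ᵥ x)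
      = x ⬝ᵥ B.mulVec x - k * (x ⬝ᵥ A.mulVec x) := fun k x => by
    simp [sub_mulVec, smul_mulVec, dotProduct_sub, dotProduct_smul]
  have hne : ∃ x : Fin n → ℝ, 0 < x ⬝ᵥ A.mulVec x := by
    by_contra! h
    apply hA0
    have h0 : ∀ x : Fin n → ℝ, A.mulVec x = 0 := fun x =>
      (hA.dotProduct_mulVec_zero_iff x).1 (by simpa using le_antisymm (h x) (hAn x))
    exact Matrix.ext_of_mulVec_single fun i => by simp only [h0, zero_mulVec]
  constructor
  · refine posSemidef_iff_dotProduct_mulVec.2 ⟨?_, fun x => ?_⟩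
    · refine hB.isHermitian.sub ?_
      rw [IsHermitian, conjTranspose_smul, hA.isHermitian.eq, star_trivial]
    · rw [key]
      rcases (hAn x).eq_or_lt with h | h
      · rw [← h]
        simpa using hBn x
      · rw [sub_nonneg, ← le_div_iff₀ h]
        refine csInf_le ⟨0, ?_⟩ ⟨x, h, rfl⟩
        rintro r ⟨y, hy, rfl⟩
        exact div_nonneg (hBn y) (hAn y)
  · intro k hk
    obtain ⟨x, hx⟩ := hne
    refine le_csInf ⟨_, x, hx, rfl⟩ ?_
    rintro r ⟨y, hy, rfl⟩
    rw [le_div_iff₀ hy, ← sub_nonneg, ← key]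
    exact (posSemidef_iff_dotProduct_mulVec.1 hk).2 y
end

section
/- Let A and B be positive semidefinite real n×n matrices with A ≠ 0. If there exists some k > 0 such that B - k•A is positive semidefinite, then the set {k ∈ ℝ | k > 0 and B - k•A is positive semidefinite} has a greatest element. -/
open Matrix

/-- For positive semidefinite real `n × n` matrices `A ≠ 0` and `B`, if some
`k > 0` satisfies `B - k • A` PSD, then `{k | k > 0 ∧ B - k • A is PSD}` has a greatest
element. -/
theorem exists_kmax {n : ℕ} (A B : Matrix (Fin n) (Fin n) ℝ)
    (hA : A.PosSemidef) (hB : B.PosSemidef) (hA0 : A ≠ 0)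
    (h : ∃ k : ℝ, 0 < k ∧ (B - k • A).PosSemidef) :
    ∃ g : ℝ, IsGreatest {k : ℝ | 0 < k ∧ (B - k • A).PosSemidef} g := by
  have htr : 0 < A.trace :=
    lt_of_le_of_ne hA.trace_nonneg (fun e => hA0 (hA.trace_eq_zero_iff.1 e.symm))
  have hbdd : BddAbove {k : ℝ | 0 < k ∧ (B - k • A).PosSemidef} := by
    refine ⟨B.trace / A.trace, ?_⟩
    rintro k ⟨_, hk⟩
    have := hk.trace_nonneg
    rw [Matrix.trace_sub, Matrix.trace_smul, smul_eq_mul] at this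
    rw [le_div_iff₀ htr]
    linarith
  obtain ⟨k₀, hk₀, hp₀⟩ := h
  have hmem : k₀ ∈ {k : ℝ | 0 < k ∧ (B - k • A).PosSemidef} := ⟨hk₀, hp₀⟩
  refine ⟨sSup {k : ℝ | 0 < k ∧ (B - k • A).PosSemidef},
    ⟨lt_of_lt_of_le hk₀ (le_csSup hbdd hmem), ?_⟩, fun k hk => le_csSup hbdd hk⟩
  refine PosSemidef.of_dotProduct_mulVec_nonneg ?_ ?_
  · have hs : IsSelfAdjoint A := hA.isHermitian
    exact hB.isHermitian.sub (IsSelfAdjoint.smul (IsSelfAdjoint.all _) hs)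
  · intro x
    have key : ∀ k : ℝ, star x ⬝ᵥ ((B - k • A) *ᵥ x)
        = star x ⬝ᵥ (B *ᵥ x) - k * (star x ⬝ᵥ (A *ᵥ x)) := by
      intro k
      rw [Matrix.sub_mulVec, Matrix.smul_mulVec, dotProduct_sub, dotProduct_smul, smul_eq_mul]
    rw [key]
    have hAx := hA.dotProduct_mulVec_nonneg x
    have hBx := hB.dotProduct_mulVec_nonneg x
    rcases hAx.eq_or_lt with e | hpos
    · rw [← e]; simpa using hBx
    · have : sSup {k : ℝ | 0 < k ∧ (B - k • A).PosSemidef}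
          ≤ (star x ⬝ᵥ (B *ᵥ x)) / (star x ⬝ᵥ (A *ᵥ x)) := by
        refine csSup_le ⟨k₀, hmem⟩ ?_
        rintro k ⟨_, hk⟩
        have h1 := hk.dotProduct_mulVec_nonneg x
        rw [key] at h1
        rw [le_div_iff₀ hpos]
        linarith
      rw [le_div_iff₀ hpos] at this
      linarith
end

section
/- Let A, B, C be positive semidefinite real n×n matrices. Suppose k_max is the greatest element of {k ∈ ℝ | k > 0 and B - k•A is positive semidefinite}, l_max is the greatest element of {l ∈ ℝ | l > 0 and C - l•B is positive semidefinite}, and m_max is the greatest element of {m ∈ ℝ | m > 0 and C - m•A is positive semidefinite}. Then m_max ≥ k_max * l_max. -/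
open Matrix

/-- For positive semidefinite `A`, `B`, `C`, if `k_max`, `l_max`, `m_max` are
the greatest elements of the sets of positive `k` with `B - k • A` PSD, `C - l • B` PSD,
and `C - m • A` PSD respectively, then `m_max ≥ k_max * l_max`. -/
theorem kmax_mul_le {n : ℕ} (A B C : Matrix (Fin n) (Fin n) ℝ)
    (hA : A.PosSemidef) (hB : B.PosSemidef) (hC : C.PosSemidef)
    (kmax lmax mmax : ℝ)
    (hk : IsGreatest {k : ℝ | 0 < k ∧ (B - k • A).PosSemidef} kmax)
    (hl : IsGreatest {l : ℝ | 0 < l ∧ (C - l • B).PosSemidef} lmax)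
    (hm : IsGreatest {m : ℝ | 0 < m ∧ (C - m • A).PosSemidef} mmax) :
    mmax ≥ kmax * lmax := by
  obtain ⟨hk0, hkP⟩ := hk.1
  obtain ⟨hl0, hlP⟩ := hl.1
  refine hm.2 ⟨mul_pos hk0 hl0, ?_⟩
  have h := hlP.add (hkP.smul hl0.le)
  have e : C - (kmax * lmax) • A = C - lmax • B + lmax • (B - kmax • A) := by
    rw [smul_sub, smul_smul, mul_comm kmax lmax]
    abel
  rw [e]
  exact h
end

section
/- Let A, B be positive semidefinite real n×n matrices and suppose k is the greatest element of the set {k ∈ ℝ | B - k•A is positive semidefinite}. Let ρ be a positive semidefinite real n×n matrix with trace 1 whose range (as a linear map via matrix-vector multiplication) is contained in the range of B. Then for every ε > 0 there exists δ > 0 such that, setting A' = A + δ•ρ, the set {k ∈ ℝ | B - k•A' is positive semidefinite} has a greatest element k', and |k - k'| < ε. -/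
open Matrix

open scoped MatrixOrder in
lemma kc_fac {n : ℕ} (B : Matrix (Fin n) (Fin n) ℝ) (hB : B.PosSemidef) :
    ∃ T : Matrix (Fin n) (Fin n) ℝ, B = Tᴴ * T :=
  CStarAlgebra.nonneg_iff_eq_star_mul_self.mp hB.nonneg

lemma kc_cs {n : ℕ} (B : Matrix (Fin n) (Fin n) ℝ) (hB : B.PosSemidef) (x y : Fin n → ℝ) :
    (B *ᵥ y ⬝ᵥ x) ^ 2 ≤ (y ⬝ᵥ B *ᵥ y) * (x ⬝ᵥ B *ᵥ x) := by
  obtain ⟨T, rfl⟩ := kc_fac B hB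
  have key : ∀ u v : Fin n → ℝ, u ⬝ᵥ (Tᴴ * T) *ᵥ v = (T *ᵥ u) ⬝ᵥ (T *ᵥ v) := by
    intro u v
    rw [← Matrix.mulVec_mulVec, Matrix.dotProduct_mulVec, Matrix.conjTranspose_eq_transpose_of_trivial,
      Matrix.vecMul_transpose]
  rw [dotProduct_comm, key, key, key, dotProduct_comm]
  simpa [dotProduct, sq] using
    Finset.sum_mul_sq_le_sq_mul_sq Finset.univ (T *ᵥ y) (T *ᵥ x)

lemma kc_bound {n : ℕ} (B ρ : Matrix (Fin n) (Fin n) ℝ) (hB : B.PosSemidef) (hρ : ρ.PosSemidef)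
    (hsupp : LinearMap.range ρ.mulVecLin ≤ LinearMap.range B.mulVecLin) :
    ∃ C : ℝ, 0 ≤ C ∧ ∀ x : Fin n → ℝ, x ⬝ᵥ ρ *ᵥ x ≤ C * (x ⬝ᵥ B *ᵥ x) := by
  obtain ⟨T, hT⟩ := kc_fac ρ hρ
  have hle : LinearMap.range ρ.mulVecLin ≤ LinearMap.range (Tᴴ).mulVecLin := by
    rw [hT, Matrix.mulVecLin_mul]
    exact LinearMap.range_comp_le_range _ _
  have heq : LinearMap.range ρ.mulVecLin = LinearMap.range (Tᴴ).mulVecLin := by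
    apply Submodule.eq_of_le_of_finrank_eq hle
    change ρ.rank = (Tᴴ).rank
    rw [hT, Matrix.rank_conjTranspose_mul_self, Matrix.rank_conjTranspose]
  have hy : ∀ i, ∃ y : Fin n → ℝ, B *ᵥ y = T i := by
    intro i
    have : T i ∈ LinearMap.range (Tᴴ).mulVecLin := by
      refine ⟨Pi.single i 1, ?_⟩
      ext j
      simp
    rw [← heq] at this
    obtain ⟨y, h⟩ := hsupp this
    exact ⟨y, h⟩
  choose y hy using hy
  have hnn : ∀ x : Fin n → ℝ, 0 ≤ x ⬝ᵥ B *ᵥ x := fun x => by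
    simpa using hB.dotProduct_mulVec_nonneg x
  refine ⟨∑ i, y i ⬝ᵥ B *ᵥ y i, Finset.sum_nonneg fun i _ => hnn _, fun x => ?_⟩
  have : x ⬝ᵥ ρ *ᵥ x = ∑ i, (T i ⬝ᵥ x) ^ 2 := by
    rw [hT, ← Matrix.mulVec_mulVec, Matrix.dotProduct_mulVec,
      Matrix.conjTranspose_eq_transpose_of_trivial, Matrix.vecMul_transpose]
    simp [dotProduct, Matrix.mulVec, sq]
  rw [this, Finset.sum_mul]
  refine Finset.sum_le_sum fun i _ => ?_
  rw [← hy i]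
  exact kc_cs B hB x (y i)

/-- Continuity of the entailment strength. If `k` is the greatest element of
`{k | B - k • A is PSD}` and `ρ` is a density matrix whose range is contained in the range
of `B`, then for every `ε > 0` there is `δ > 0` such that, setting `A' = A + δ • ρ`, the
set `{m | B - m • A' is PSD}` has a greatest element `k'` with `|k - k'| < ε`. -/
theorem kmax_continuity {n : ℕ} (A B ρ : Matrix (Fin n) (Fin n) ℝ)
    (hA : A.PosSemidef) (hB : B.PosSemidef)
    (k : ℝ) (hk : IsGreatest {k : ℝ | (B - k • A).PosSemidef} k)
    (hρ : ρ.PosSemidef) (hρtr : ρ.trace = 1)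
    (hsupp : LinearMap.range ρ.mulVecLin ≤ LinearMap.range B.mulVecLin) :
    ∀ ε : ℝ, 0 < ε → ∃ δ : ℝ, 0 < δ ∧ ∃ k' : ℝ,
      IsGreatest {m : ℝ | (B - m • (A + δ • ρ)).PosSemidef} k' ∧ |k - k'| < ε := by
  intro ε hε
  obtain ⟨C, hC, hCb⟩ := kc_bound B ρ hB hρ hsupp
  have hk0 : 0 ≤ k := hk.2 (by simpa using hB)
  have herm : ∀ (M : Matrix (Fin n) (Fin n) ℝ), M.IsHermitian → ∀ m : ℝ,
      (B - m • M).IsHermitian := by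
    intro M hM m
    have h1 := hB.1
    unfold Matrix.IsHermitian at *
    rw [Matrix.conjTranspose_sub, Matrix.conjTranspose_smul, hM, h1, star_trivial]
  have hiff : ∀ (M : Matrix (Fin n) (Fin n) ℝ), M.IsHermitian → ∀ m : ℝ,
      (B - m • M).PosSemidef ↔ ∀ x : Fin n → ℝ, m * (x ⬝ᵥ M *ᵥ x) ≤ x ⬝ᵥ B *ᵥ x := by
    intro M hM m
    rw [Matrix.posSemidef_iff_dotProduct_mulVec, and_iff_right (herm M hM m)]
    simp [Matrix.sub_mulVec, Matrix.smul_mulVec, dotProduct_sub]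
  have hnn : ∀ (M : Matrix (Fin n) (Fin n) ℝ), M.PosSemidef → ∀ x : Fin n → ℝ,
      0 ≤ x ⬝ᵥ M *ᵥ x := fun M hM x => by
    simpa using hM.dotProduct_mulVec_nonneg x
  obtain ⟨t, ht0, ht1, htε⟩ : ∃ t : ℝ, 0 < t ∧ t ≤ 1 ∧ k * t < ε := by
    refine ⟨ε / (k + ε), by positivity, ?_, ?_⟩
    · rw [div_le_one (by positivity)]; linarith
    · rw [mul_div_assoc', div_lt_iff₀ (by positivity)]; nlinarith
  have hδ : 0 < t / (k * C + 1) := by positivity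
  have hδC : k * C * (t / (k * C + 1)) ≤ t := by
    rw [mul_div_assoc', div_le_iff₀ (by positivity)]; nlinarith [mul_nonneg hk0 hC]
  generalize t / (k * C + 1) = δ at hδ hδC
  have hM : (A + δ • ρ).IsHermitian := by
    have h1 := hA.1
    have h2 := hρ.1
    unfold Matrix.IsHermitian at *
    rw [Matrix.conjTranspose_add, Matrix.conjTranspose_smul, h1, h2, star_trivial]
  have hMx : ∀ x : Fin n → ℝ, x ⬝ᵥ (A + δ • ρ) *ᵥ x = x ⬝ᵥ A *ᵥ x + δ * (x ⬝ᵥ ρ *ᵥ x) := by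
    intro x
    simp [Matrix.add_mulVec, Matrix.smul_mulVec, dotProduct_add]
  have hset : {m : ℝ | (B - m • (A + δ • ρ)).PosSemidef} =
      {m : ℝ | ∀ x : Fin n → ℝ, m * (x ⬝ᵥ A *ᵥ x + δ * (x ⬝ᵥ ρ *ᵥ x)) ≤ x ⬝ᵥ B *ᵥ x} := by
    ext m
    simp only [Set.mem_ofPred_eq, hiff _ hM m, hMx]
  have hkx := (hiff A hA.1 k).1 hk.1
  refine ⟨δ, hδ, ?_⟩
  rw [hset]
  set S := {m : ℝ | ∀ x : Fin n → ℝ, m * (x ⬝ᵥ A *ᵥ x + δ * (x ⬝ᵥ ρ *ᵥ x)) ≤ x ⬝ᵥ B *ᵥ x} with hS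
  have hclosed : IsClosed S := by
    rw [hS, Set.ofPred_forall]
    exact isClosed_iInter fun x => isClosed_le (by fun_prop) (by fun_prop)
  have hub : ∀ m ∈ S, m ≤ k := by
    intro m hm
    rcases le_total m 0 with h | h
    · linarith
    · apply hk.2
      refine (hiff A hA.1 m).2 fun x => ?_
      have h1 := hm x
      have h2 := mul_nonneg h (mul_nonneg hδ.le (hnn ρ hρ x))
      linarith
  have hmem : k * (1 - t) ∈ S := by
    intro x
    have h1 := mul_le_mul_of_nonneg_left (hkx x) (sub_nonneg.2 ht1)
    have hb := hnn B hB x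
    have hr := hnn ρ hρ x
    have h2 : k * (1 - t) * (δ * (x ⬝ᵥ ρ *ᵥ x)) ≤ k * (δ * (x ⬝ᵥ ρ *ᵥ x)) := by
      apply mul_le_mul_of_nonneg_right _ (by positivity)
      nlinarith
    have h3 : k * (δ * (x ⬝ᵥ ρ *ᵥ x)) ≤ k * (δ * (C * (x ⬝ᵥ B *ᵥ x))) := by
      have := hCb x
      gcongr
    have h4 := mul_le_mul_of_nonneg_right hδC hb
    linarith
  have hbdd : BddAbove S := ⟨k, hub⟩
  have hg := hclosed.isGreatest_csSup ⟨_, hmem⟩ hbdd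
  refine ⟨sSup S, hg, ?_⟩
  have h1 := hub _ hg.1
  have h2 := hg.2 hmem
  rw [abs_lt]
  constructor <;> linarith
end

section
/- Let B be a positive definite real n×n matrix, A a nonzero positive semidefinite real n×n matrix, ρ a positive semidefinite real n×n matrix with trace 1, and δ > 0. Let k be the greatest element of {k ∈ ℝ | B - k•A is positive semidefinite} and k' the greatest element of {k ∈ ℝ | B - k•(A + δ•ρ) is positive semidefinite}. Then 0 < k' ≤ k and k - k' ≤ δ * μ * k * k', where μ is the largest eigenvalue of B⁻¹. -/
open Matrix

lemma psd_of_eig_le {n : ℕ} {H : Matrix (Fin n) (Fin n) ℝ} (hH : H.IsHermitian) (c : ℝ)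
    (h : ∀ i, hH.eigenvalues i ≤ c) : (c • (1 : Matrix (Fin n) (Fin n) ℝ) - H).PosSemidef := by
  have h1 : (diagonal (fun i => c - hH.eigenvalues i)).PosSemidef :=
    PosSemidef.diagonal (fun i => by simpa using h i)
  have h2 := h1.mul_mul_conjTranspose_same (hH.eigenvectorUnitary : Matrix (Fin n) (Fin n) ℝ)
  have h3 : diagonal (fun i => c - hH.eigenvalues i)
      = c • (1 : Matrix (Fin n) (Fin n) ℝ) - diagonal hH.eigenvalues := by
    ext i j
    by_cases hij : i = j
    · subst hij; simp
    · simp [hij]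
  have h4 := hH.spectral_theorem
  rw [Unitary.conjStarAlgAut_apply] at h4
  have h5 : (hH.eigenvectorUnitary : Matrix (Fin n) (Fin n) ℝ)
      * (hH.eigenvectorUnitary : Matrix (Fin n) (Fin n) ℝ)ᴴ = 1 := by
    exact Unitary.coe_mul_star_self hH.eigenvectorUnitary
  convert h2 using 1
  rw [h3, mul_sub, sub_mul, mul_smul_comm, mul_one, smul_mul_assoc, h5]
  congr 1

lemma psd_trace {n : ℕ} {P : Matrix (Fin n) (Fin n) ℝ} (hP : P.PosSemidef) :
    (P.trace • (1 : Matrix (Fin n) (Fin n) ℝ) - P).PosSemidef := by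
  apply psd_of_eig_le hP.1
  intro i
  rw [hP.1.trace_eq_sum_eigenvalues]
  simpa using Finset.single_le_sum (f := hP.1.eigenvalues)
    (fun j _ => hP.eigenvalues_nonneg j) (Finset.mem_univ i)

lemma psd_inv {n : ℕ} {B : Matrix (Fin n) (Fin n) ℝ} (hB : B.PosDef) {μ : ℝ} (hμ : 0 < μ)
    (h : (μ • (1 : Matrix (Fin n) (Fin n) ℝ) - B⁻¹).PosSemidef) :
    (μ • B - 1).PosSemidef := by
  have hI : (μ • (1 : Matrix (Fin n) (Fin n) ℝ)).PosDef := PosDef.one.smul hμ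
  have := hB.isUnit.invertible
  have := hI.isUnit.invertible
  have h1 := (hB.fromBlocks₁₁ (1 : Matrix (Fin n) (Fin n) ℝ) (μ • 1)).2 (by simpa using h)
  have h2 := (PosDef.fromBlocks₂₂ B (1 : Matrix (Fin n) (Fin n) ℝ) hI).1 h1
  have h3 : (μ • (1 : Matrix (Fin n) (Fin n) ℝ))⁻¹ = μ⁻¹ • 1 := by
    apply inv_eq_right_inv
    simp [smul_smul, hμ.ne']
  rw [h3] at h2
  have h4 := h2.smul hμ.le
  have h5 : μ ≠ 0 := ne_of_gt hμ
  simpa [smul_sub, smul_smul, h5] using h4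

/-- Quantitative continuity bound. Let `B` be positive definite, `A ≠ 0`
positive semidefinite, `ρ` a density matrix, `δ > 0`. Let `k` be the greatest element of
`{k | B - k • A is PSD}`, `k'` the greatest element of `{k | B - k • (A + δ • ρ) is PSD}`,
and `μ` the largest eigenvalue of `B⁻¹`. Then `0 < k' ≤ k` and `k - k' ≤ δ * μ * k * k'`. -/
theorem kmax_continuity_bound {n : ℕ} (A B ρ : Matrix (Fin n) (Fin n) ℝ)
    (hB : B.PosDef) (hA : A.PosSemidef) (hA0 : A ≠ 0)
    (hρ : ρ.PosSemidef) (hρtr : ρ.trace = 1)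
    (δ : ℝ) (hδ : 0 < δ) (k k' : ℝ)
    (hk : IsGreatest {k : ℝ | (B - k • A).PosSemidef} k)
    (hk' : IsGreatest {m : ℝ | (B - m • (A + δ • ρ)).PosSemidef} k')
    (μ : ℝ) (hμ : μ = ⨆ i, hB.inv.1.eigenvalues i) :
    0 < k' ∧ k' ≤ k ∧ k - k' ≤ δ * μ * k * k' := by
  have hne : Nonempty (Fin n) := by
    by_contra h
    rw [not_nonempty_iff] at h
    exact hA0 (Subsingleton.elim _ _)
  have hle : ∀ i, hB.inv.1.eigenvalues i ≤ μ := fun i => by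
    rw [hμ]; exact le_ciSup (Set.finite_range _).bddAbove i
  have hμ0 : 0 < μ := (hB.inv.eigenvalues_pos hne.some).trans_le (hle _)
  have h1 := psd_inv hB hμ0 (psd_of_eig_le hB.inv.1 μ hle)
  have htr : 0 < A.trace :=
    lt_of_le_of_ne hA.trace_nonneg (fun h => hA0 (hA.trace_eq_zero_iff.1 h.symm))
  have hk0 : 0 < k := by
    have hm : (B - (A.trace * μ)⁻¹ • A).PosSemidef := by
      have := ((h1.smul htr.le).add (psd_trace hA)).smul (a := (A.trace * μ)⁻¹) (by positivity)
      convert this using 1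
      have e : (A.trace * μ)⁻¹ * (A.trace * μ) = 1 := inv_mul_cancel₀ (by positivity)
      rw [smul_sub, sub_add_sub_cancel, smul_sub, smul_smul, smul_smul, mul_assoc, e, one_smul]
    exact lt_of_lt_of_le (by positivity) (hk.2 hm)
  have hρμ : (μ • B - ρ).PosSemidef := by
    have := h1.add (psd_trace hρ)
    simpa [hρtr] using this
  have hD : 0 < 1 + δ * μ * k := by positivity
  have hlow : k / (1 + δ * μ * k) ≤ k' := by
    apply hk'.2
    have := (hk.1.add (hρμ.smul (a := k * δ) (by positivity))).smul
      (a := (1 + δ * μ * k)⁻¹) (by positivity)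
    show (B - (k / (1 + δ * μ * k)) • (A + δ • ρ)).PosSemidef
    convert this using 1
    ext i j
    simp only [Matrix.sub_apply, Matrix.add_apply, Matrix.smul_apply, smul_eq_mul]
    field_simp
    ring
  have hk'0 : 0 < k' := lt_of_lt_of_le (by positivity) hlow
  refine ⟨hk'0, ?_, ?_⟩
  · apply hk.2
    have := PosSemidef.add hk'.1 (hρ.smul (a := k' * δ) (by positivity))
    show (B - k' • A).PosSemidef
    convert this using 1
    ext i j
    simp only [Matrix.sub_apply, Matrix.add_apply, Matrix.smul_apply, smul_eq_mul]
    ring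
  · rw [div_le_iff₀ hD] at hlow
    linarith
end

section
/- Let N and S be finite index types. Let n₁, n₂, n₃, n₄ be positive semidefinite real matrices indexed by N, let Z be a positive semidefinite real matrix indexed by N × S × N, and let k, l ∈ ℝ with 0 < k ≤ 1 and 0 < l ≤ 1. Suppose n₂ - k•n₁ and n₄ - l•n₃ are positive semidefinite. Let φ be a linear map from real matrices indexed by N × (N × S × N) × N to real matrices indexed by S which sends every positive semidefinite matrix to a positive semidefinite matrix. Then φ(n₂ ⊗ₖ Z ⊗ₖ n₄) - (k*l)•φ(n₁ ⊗ₖ Z ⊗ₖ n₃) is positive semidefinite; that is, the meaning of the sentence 'n₁ verb n₃' is a (k·l)-hyponym of the meaning of 'n₂ verb n₄'. -/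
open Matrix Kronecker

/-- `k`-hyponymy in positive transitive sentences. If `n₁ ⊑_k n₂` and
`n₃ ⊑_l n₄` (with `0 < k ≤ 1`, `0 < l ≤ 1`) and `φ` is a positivity-preserving linear
sentence-meaning map, then `φ(n₁ ⊗ Z ⊗ n₃) ⊑_{k·l} φ(n₂ ⊗ Z ⊗ n₄)`. -/
theorem transitive_sentence_khyponym {N S : Type*}
    [Fintype N] [DecidableEq N] [Fintype S] [DecidableEq S]
    (n₁ n₂ n₃ n₄ : Matrix N N ℝ)
    (hn₁ : n₁.PosSemidef) (hn₂ : n₂.PosSemidef) (hn₃ : n₃.PosSemidef) (hn₄ : n₄.PosSemidef)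
    (Z : Matrix (N × S × N) (N × S × N) ℝ) (hZ : Z.PosSemidef)
    (k l : ℝ) (hk : 0 < k) (hk1 : k ≤ 1) (hl : 0 < l) (hl1 : l ≤ 1)
    (h21 : (n₂ - k • n₁).PosSemidef) (h43 : (n₄ - l • n₃).PosSemidef)
    (φ : Matrix (N × (N × S × N) × N) (N × (N × S × N) × N) ℝ →ₗ[ℝ] Matrix S S ℝ)
    (hφ : ∀ M : Matrix (N × (N × S × N) × N) (N × (N × S × N) × N) ℝ,
      M.PosSemidef → (φ M).PosSemidef) :
    (φ (n₂ ⊗ₖ (Z ⊗ₖ n₄)) - (k * l) • φ (n₁ ⊗ₖ (Z ⊗ₖ n₃))).PosSemidef := by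
  have e : n₂ ⊗ₖ (Z ⊗ₖ n₄) - (k * l) • (n₁ ⊗ₖ (Z ⊗ₖ n₃)) =
      (n₂ - k • n₁) ⊗ₖ (Z ⊗ₖ n₄) + (k • n₁) ⊗ₖ (Z ⊗ₖ (n₄ - l • n₃)) := by
    ext ⟨a, b, c⟩ ⟨a', b', c'⟩
    simp only [Matrix.sub_apply, Matrix.add_apply, Matrix.smul_apply, kroneckerMap_apply,
      smul_eq_mul]
    ring
  rw [← map_smul, ← map_sub, e]
  exact hφ _ ((h21.kronecker (hZ.kronecker hn₄)).add
    ((hn₁.smul hk.le).kronecker (hZ.kronecker h43)))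
end

section
/- Let ι be a finite index type, and for each i ∈ ι let m(i) be a finite index type. Let A, B assign to each i ∈ ι a real square matrix on m(i), and let k : ι → ℝ with k(i) ≥ 0 for all i. Suppose each A(i) is positive semidefinite and each B(i) - k(i)•A(i) is positive semidefinite. Define T(A) to be the real matrix indexed by the dependent function type Π i, m(i) with entries T(A)(x, y) = ∏_{i ∈ ι} A(i)(x(i), y(i)) (the Kronecker product of the family), and similarly T(B). Let S be a finite index type and let φ be a linear map from real matrices on Π i, m(i) to real matrices on S which sends positive semidefinite matrices to positive semidefinite matrices. Then φ(T(B)) - (∏_{i ∈ ι} k(i))•φ(T(A)) is positive semidefinite; that is, φ(T(A)) is a (∏ᵢ kᵢ)-hyponym of φ(T(B)). -/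
open Matrix

/-- Generalised Sentence `k`-Hyponymy. If `A i ⊑_{k i} B i` for each word
`i` (with `A i` PSD and `k i ≥ 0`), and `φ` is a positivity-preserving linear map on the
Kronecker product space, then `φ(⊗ᵢ A i) ⊑_{∏ᵢ k i} φ(⊗ᵢ B i)`. -/
theorem general_sentence_khyponym {ι : Type*} [Fintype ι] [DecidableEq ι]
    {m : ι → Type*} [∀ i, Fintype (m i)] [∀ i, DecidableEq (m i)]
    (A B : ∀ i, Matrix (m i) (m i) ℝ) (k : ι → ℝ) (hk : ∀ i, 0 ≤ k i)
    (hA : ∀ i, (A i).PosSemidef) (hBA : ∀ i, (B i - k i • A i).PosSemidef)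
    {S : Type*} [Fintype S] [DecidableEq S]
    (φ : Matrix (∀ i, m i) (∀ i, m i) ℝ →ₗ[ℝ] Matrix S S ℝ)
    (hφ : ∀ M : Matrix (∀ i, m i) (∀ i, m i) ℝ, M.PosSemidef → (φ M).PosSemidef) :
    (φ (Matrix.of fun x y => ∏ i, B i (x i) (y i)) -
      (∏ i, k i) • φ (Matrix.of fun x y => ∏ i, A i (x i) (y i))).PosSemidef := by
  have had : ∀ M N : Matrix (∀ i, m i) (∀ i, m i) ℝ, M.PosSemidef → N.PosSemidef →
      (M ⊙ N).PosSemidef := fun M N hM hN => hM.hadamard hN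
  have hB : ∀ i, (B i).PosSemidef := fun i => by
    have h := (hBA i).add ((hA i).smul (hk i))
    simpa using h
  have key : ∀ s : Finset ι,
      (Matrix.of fun x y : ∀ i, m i => ∏ i ∈ s, A i (x i) (y i)).PosSemidef ∧
      ((Matrix.of fun x y : ∀ i, m i => ∏ i ∈ s, B i (x i) (y i)) -
        (∏ i ∈ s, k i) •
          (Matrix.of fun x y : ∀ i, m i => ∏ i ∈ s, A i (x i) (y i))).PosSemidef := by
    intro s
    induction s using Finset.induction_on with
    | empty =>
      constructor
      · have h := Matrix.posSemidef_vecMulVec_self_star (fun _ : ∀ i, m i => (1 : ℝ))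
        convert h using 1
        ext x y
        simp [Matrix.vecMulVec_apply]
      · have h : PosSemidef (0 : Matrix (∀ i, m i) (∀ i, m i) ℝ) := PosSemidef.zero
        convert h using 1
        ext x y
        simp
    | insert a s ha ih =>
      obtain ⟨h1, h2⟩ := ih
      constructor
      · have h := had _ _ ((hA a).submatrix (fun x : ∀ i, m i => x a)) h1
        convert h using 1
        ext x y
        simp [Finset.prod_insert ha]
      · have hK : 0 ≤ ∏ i ∈ s, k i := Finset.prod_nonneg fun i _ => hk i
        have h := (had _ _ ((hB a).submatrix (fun x : ∀ i, m i => x a)) h2).add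
          (had _ _ ((hBA a).submatrix (fun x : ∀ i, m i => x a)) (h1.smul hK))
        convert h using 1
        ext x y
        simp [Finset.prod_insert ha]
        ring
  have h := hφ _ (key Finset.univ).2
  rwa [map_sub, map_smul] at h
end

section
/- Let ι be a finite index type, and for each i ∈ ι let m(i) be a finite index type. Let A, B assign to each i ∈ ι a real square matrix on m(i). Suppose each A(i) is positive semidefinite and each B(i) - A(i) is positive semidefinite (i.e. A(i) ⊑ B(i) in the Löwner order for each i). Define T(A) to be the real matrix indexed by Π i, m(i) with entries T(A)(x, y) = ∏_{i ∈ ι} A(i)(x(i), y(i)), and similarly T(B). Let φ be a linear map from real matrices on Π i, m(i) to real matrices on a finite index type S which sends positive semidefinite matrices to positive semidefinite matrices. Then φ(T(B)) - φ(T(A)) is positive semidefinite, i.e. φ(T(A)) ⊑ φ(T(B)). -/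
open Matrix

lemma hadamard_psd_aux {n : Type*} {A B : Matrix n n ℝ}
    (hA : A.PosSemidef) (hB : B.PosSemidef) : (A ⊙ B).PosSemidef :=
  Matrix.PosSemidef.hadamard hA hB

lemma prod_psd_aux {ι : Type*} [DecidableEq ι]
    {m : ι → Type*} [Fintype (∀ i, m i)]
    (A B : ∀ i, Matrix (m i) (m i) ℝ)
    (hA : ∀ i, (A i).PosSemidef) (hBA : ∀ i, (B i - A i).PosSemidef) (s : Finset ι) :
    (Matrix.of fun x y : (∀ i, m i) => ∏ i ∈ s, A i (x i) (y i)).PosSemidef ∧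
    ((Matrix.of fun x y : (∀ i, m i) => ∏ i ∈ s, B i (x i) (y i)) -
      (Matrix.of fun x y : (∀ i, m i) => ∏ i ∈ s, A i (x i) (y i))).PosSemidef := by
  induction s using Finset.induction_on with
  | empty =>
    constructor
    · have h := Matrix.posSemidef_vecMulVec_self_star (fun _ : (∀ i, m i) => (1 : ℝ))
      convert h using 1
      ext x y
      simp [Matrix.vecMulVec_apply]
    · simpa using Matrix.PosSemidef.zero
  | insert a s ha ih =>
    obtain ⟨h1, h2⟩ := ih
    have hB : (B a).PosSemidef := by simpa using (hBA a).add (hA a)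
    have kA := (hA a).submatrix (fun x : (∀ i, m i) => x a)
    have kB := hB.submatrix (fun x : (∀ i, m i) => x a)
    have kBA := (hBA a).submatrix (fun x : (∀ i, m i) => x a)
    constructor
    · convert hadamard_psd_aux kA h1 using 1
      ext x y
      simp [Finset.prod_insert ha]
    · convert (hadamard_psd_aux kB h2).add (hadamard_psd_aux kBA h1) using 1
      ext x y
      simp [Finset.prod_insert ha]
      ring

/-- Strict entailment in each component lifts to the sentence level: if
`A i ⊑ B i` in the Löwner order for each `i` (with each `A i` PSD), and `φ` is a
positivity-preserving linear map on the Kronecker product space, then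
`φ(⊗ᵢ A i) ⊑ φ(⊗ᵢ B i)`. -/
theorem general_sentence_strict_entailment {ι : Type*} [Fintype ι] [DecidableEq ι]
    {m : ι → Type*} [∀ i, Fintype (m i)] [∀ i, DecidableEq (m i)]
    (A B : ∀ i, Matrix (m i) (m i) ℝ)
    (hA : ∀ i, (A i).PosSemidef) (hBA : ∀ i, (B i - A i).PosSemidef)
    {S : Type*} [Fintype S] [DecidableEq S]
    (φ : Matrix (∀ i, m i) (∀ i, m i) ℝ →ₗ[ℝ] Matrix S S ℝ)
    (hφ : ∀ M : Matrix (∀ i, m i) (∀ i, m i) ℝ, M.PosSemidef → (φ M).PosSemidef) :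
    (φ (Matrix.of fun x y => ∏ i, B i (x i) (y i)) -
      φ (Matrix.of fun x y => ∏ i, A i (x i) (y i))).PosSemidef := by
  rw [← map_sub]
  exact hφ _ (prod_psd_aux A B hA hBA Finset.univ).2
end

section
/- Let ψ and φ be orthonormal vectors in ℝ^n (so ⟨ψ,ψ⟩ = ⟨φ,φ⟩ = 1 and ⟨ψ,φ⟩ = 0), let r, s ∈ ℝ with 0 < r < 1 and 0 < s < 1, and define the density matrices ρ = r•(ψψᵀ) + (1-r)•(φφᵀ) and σ = s•(ψψᵀ) + (1-s)•(φφᵀ), where ψψᵀ denotes the outer product matrix with entries ψ(i)·ψ(j). Then the greatest element of the set {k ∈ ℝ | ρ - k•σ is positive semidefinite} equals min(r/s, (1-r)/(1-s)); in particular it is r/s if r < s and (1-r)/(1-s) otherwise. -/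
open Matrix

/-- For orthonormal `ψ, φ ∈ ℝ^n` and `0 < r < 1`, `0 < s < 1`, with
`ρ = r • ψψᵀ + (1-r) • φφᵀ` and `σ = s • ψψᵀ + (1-s) • φφᵀ`, the greatest element of
`{k | ρ - k • σ is PSD}` is `min (r/s) ((1-r)/(1-s))`: it is `r/s` if `r < s` and
`(1-r)/(1-s)` otherwise. -/
theorem two_state_entailment_strength {n : ℕ} (ψ φ : Fin n → ℝ)
    (hψ : ψ ⬝ᵥ ψ = 1) (hφ : φ ⬝ᵥ φ = 1) (hψφ : ψ ⬝ᵥ φ = 0)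
    (r s : ℝ) (hr0 : 0 < r) (hr1 : r < 1) (hs0 : 0 < s) (hs1 : s < 1) :
    IsGreatest
      {k : ℝ | ((r • vecMulVec ψ ψ + (1 - r) • vecMulVec φ φ) -
        k • (s • vecMulVec ψ ψ + (1 - s) • vecMulVec φ φ)).PosSemidef}
      (min (r / s) ((1 - r) / (1 - s))) := by
  have hφψ : φ ⬝ᵥ ψ = 0 := by rw [dotProduct_comm]; exact hψφ
  have h1s : 0 < 1 - s := by linarith
  have key : ∀ k : ℝ, (r • vecMulVec ψ ψ + (1 - r) • vecMulVec φ φ) -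
        k • (s • vecMulVec ψ ψ + (1 - s) • vecMulVec φ φ) =
      (r - k * s) • vecMulVec ψ ψ + ((1 - r) - k * (1 - s)) • vecMulVec φ φ := by
    intro k
    module
  have hp : ∀ v : Fin n → ℝ, (vecMulVec v v).PosSemidef := by
    intro v
    simpa using posSemidef_vecMulVec_self_star v
  constructor
  · rw [Set.mem_setOf_eq, key]
    have h1 : min (r / s) ((1 - r) / (1 - s)) * s ≤ r :=
      (le_div_iff₀ hs0).1 (min_le_left _ _)
    have h2 : min (r / s) ((1 - r) / (1 - s)) * (1 - s) ≤ 1 - r :=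
      (le_div_iff₀ h1s).1 (min_le_right _ _)
    exact ((hp ψ).smul (sub_nonneg.2 h1)).add ((hp φ).smul (sub_nonneg.2 h2))
  · intro k hk
    rw [Set.mem_setOf_eq, key] at hk
    have h1 := hk.dotProduct_mulVec_nonneg ψ
    have h2 := hk.dotProduct_mulVec_nonneg φ
    simp [add_mulVec, smul_mulVec, vecMulVec_mulVec, hψ, hφ, hψφ, hφψ] at h1 h2
    refine le_min ((le_div_iff₀ hs0).2 ?_) ((le_div_iff₀ h1s).2 ?_) <;> linarith
end
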